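/- In the calculus λ^test_trust, every closed typed term that contains no redex is a value. -/

import Mathlib

open scoped Classical

/-- Types of the calculus λ^test_trust. -/
inductive Ty : Type where
  | atom : ℕ → Ty
  | arrow : Ty → Ty → Ty
  | sum : List Ty → Ty
  | tuple : Ty → ℕ → Ty
  | bool : List (ℚ × Ty) → ℚ → Ty

/-- Subtyping relation extending a relation `S` on atomic types.
    The convention identifying a one-summand sum with its summand is included. -/
inductive SubTy (S : ℕ → ℕ → Prop) : Ty → Ty → Prop where
  | refl (A) : SubTy S A A
  | trans {A B C} : SubTy S A B → SubTy S B C → SubTy S A C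
  | atom {a b} : S a b → SubTy S (.atom a) (.atom b)
  | arrow {A1 A2 B1 B2} : SubTy S B1 A1 → SubTy S A2 B2 →
      SubTy S (.arrow A1 A2) (.arrow B1 B2)
  | sum {As Bs : List Ty} (g : Fin As.length → Ty) :
      (∀ i, g i ∈ Bs) → (∀ i, SubTy S (As.get i) (g i)) →
      SubTy S (.sum As) (.sum Bs)
  | tuple {A B m n} : SubTy S A B → n ≤ m → SubTy S (.tuple A m) (.tuple B n)
  | sumSingle (A) : SubTy S (.sum [A]) A
  | singleSum (A) : SubTy S A (.sum [A])

/-- Terms of the calculus λ^test_trust. -/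
inductive Tm : Type where
  | tt : Tm
  | ff : Tm
  | var : ℕ → Tm
  | lam : ℕ → Ty → Tm → Tm
  | app : Tm → Tm → Tm
  | choice : List ℚ → List Tm → Tm
  | exp : ℕ → Tm → Tm
  | tup : List Tm → Tm
  | proj : Tm → ℕ → Tm
  | trust : Tm → List (ℚ × Ty) → ℚ → Tm

mutual
/-- Substitution `t[s/x]`. -/
def subst (x : ℕ) (s : Tm) : Tm → Tm
  | .tt => .tt
  | .ff => .ff
  | .var y => if y = x then s else .var y
  | .lam y A t => if y = x then .lam y A t else .lam y A (subst x s t)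
  | .app t u => .app (subst x s t) (subst x s u)
  | .choice qs ts => .choice qs (substList x s ts)
  | .exp n t => .exp n (subst x s t)
  | .tup ts => .tup (substList x s ts)
  | .proj t j => .proj (subst x s t) j
  | .trust t P e => .trust (subst x s t) P e

def substList (x : ℕ) (s : Tm) : List Tm → List Tm
  | [] => []
  | t :: ts => subst x s t :: substList x s ts
end

/-- Typing judgement of λ^test_trust, relative to an atomic subtyping relation `S`
    and an assignment `env` of types to variables. -/
inductive HasTy (S : ℕ → ℕ → Prop) : (ℕ → Ty) → Tm → Ty → Prop where
  | tt {env P e} : HasTy S env .tt (.bool P e)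
  | ff {env P e} : HasTy S env .ff (.bool P e)
  | var {env x} : HasTy S env (.var x) (env x)
  | lam {env x A t B} : HasTy S (Function.update env x A) t B →
      HasTy S env (.lam x A t) (.arrow A B)
  | app {env f u A B C} : HasTy S env f (.arrow A B) → HasTy S env u C →
      SubTy S C A → HasTy S env (.app f u) B
  | appChoice {env f u C} {As : List (Ty × Ty)} :
      HasTy S env f (.sum (As.map (fun p => Ty.arrow p.1 p.2))) →
      HasTy S env u C → (∀ p ∈ As, SubTy S C p.1) → As ≠ [] →
      HasTy S env (.app f u) (.sum (As.map Prod.snd))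
  | choice {env qs ts} {As : List Ty} : qs.length = ts.length → ts ≠ [] → qs.sum = 1 →
      ts.length = As.length →
      (∀ i (h1 : i < ts.length) (h2 : i < As.length),
        HasTy S env (ts.get ⟨i, h1⟩) (As.get ⟨i, h2⟩)) →
      (∃ A, ∀ B ∈ As, SubTy S B A) →
      HasTy S env (.choice qs ts) (.sum As)
  | exp {env n t A} : 1 ≤ n → HasTy S env t A →
      HasTy S env (.exp n t) (.tuple A n)
  | tup {env ts E} {Es : List Ty} : ts ≠ [] → ts.length = Es.length →
      (∀ i (h1 : i < ts.length) (h2 : i < Es.length),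
        HasTy S env (ts.get ⟨i, h1⟩) (Es.get ⟨i, h2⟩)) →
      (∀ E' ∈ Es, SubTy S E' E) → HasTy S env (.tup ts) (.tuple E ts.length)
  | proj {env t A n j} : HasTy S env t (.tuple A n) → 1 ≤ j → j ≤ n →
      HasTy S env (.proj t j) A
  | trust {env t A n P e} : HasTy S env t (.tuple A n) →
      HasTy S env (.trust t P e) (.bool P e)

/-- Values of λ^test_trust. -/
inductive IsValue : Tm → Prop where
  | tt : IsValue .tt
  | ff : IsValue .ff
  | lam {x A t} : IsValue (.lam x A t)
  | tup {ts} : (∀ u ∈ ts, IsValue u) → IsValue (.tup ts)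

/-- `ClosedU V t`: all free variables of `t` are in `V`. -/
inductive ClosedU : List ℕ → Tm → Prop where
  | tt {V} : ClosedU V .tt
  | ff {V} : ClosedU V .ff
  | var {V x} : x ∈ V → ClosedU V (.var x)
  | lam {V x A t} : ClosedU (x :: V) t → ClosedU V (.lam x A t)
  | app {V t u} : ClosedU V t → ClosedU V u → ClosedU V (.app t u)
  | choice {V qs ts} : (∀ t ∈ ts, ClosedU V t) → ClosedU V (.choice qs ts)
  | exp {V n t} : ClosedU V t → ClosedU V (.exp n t)
  | tup {V ts} : (∀ t ∈ ts, ClosedU V t) → ClosedU V (.tup ts)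
  | proj {V t j} : ClosedU V t → ClosedU V (.proj t j)
  | trust {V t P e} : ClosedU V t → ClosedU V (.trust t P e)

/-- `t` is a closed term. -/
def Closed (t : Tm) : Prop := ClosedU [] t

/-- The frequency distribution encoded by the list of types `Ss` is within
    total-variation distance `ε` of the probability distribution `P` over types. -/
def FreqClose (S : ℕ → ℕ → Prop) (Ss : List Ty) (P : List (ℚ × Ty)) (ε : ℚ) : Prop :=
  (∀ qB ∈ P,
      |((Ss.countP (fun T => decide (SubTy S T qB.2)) : ℚ) / (Ss.length : ℚ)) - qB.1| ≤ ε) ∧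
  (∀ T ∈ Ss, ∃ qB ∈ P, SubTy S T qB.2)

/-- The tuple of values `ss` passes the trustworthiness check against `P` with threshold `ε`. -/
def TrustCond (S : ℕ → ℕ → Prop) (env : ℕ → Ty) (ss : List Tm)
    (P : List (ℚ × Ty)) (ε : ℚ) : Prop :=
  ∃ Ss : List Ty, List.Forall₂ (HasTy S env) ss Ss ∧ FreqClose S Ss P ε

/-- Base reduction rules `t ↦ᵢ_p t'` of λ^test_trust; the natural number `i`
    records which rule instance is used (the index of the chosen branch for a
    probabilistic choice, `0` otherwise), and `p` is the probability label. -/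
inductive Step (S : ℕ → ℕ → Prop) (env : ℕ → Ty) : Tm → ℕ → ℚ → Tm → Prop where
  | beta {x A t u} : Step S env (.app (.lam x A t) u) 0 1 (subst x u t)
  | choice {qs ts} {i : ℕ} (h1 : i < qs.length) (h2 : i < ts.length) :
      Step S env (.choice qs ts) i (qs.get ⟨i, h1⟩) (ts.get ⟨i, h2⟩)
  | exp {n t} : Step S env (.exp n t) 0 1 (.tup (List.replicate n t))
  | proj {ts : List Tm} {j : ℕ} (hj : 1 ≤ j) (h : j - 1 < ts.length) :
      Step S env (.proj (.tup ts) j) 0 1 (ts.get ⟨j - 1, h⟩)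
  | trustT {ts P e} : (∀ u ∈ ts, IsValue u) → TrustCond S env ts P e →
      Step S env (.trust (.tup ts) P e) 0 1 .tt
  | trustF {ts P e} : (∀ u ∈ ts, IsValue u) → ¬ TrustCond S env ts P e →
      Step S env (.trust (.tup ts) P e) 0 1 .ff

/-- The call-by-name reduction strategy of λ^test_trust. -/
inductive CBN (S : ℕ → ℕ → Prop) (env : ℕ → Ty) : Tm → ℕ → ℚ → Tm → Prop where
  | base {t i p t'} : Step S env t i p t' → CBN S env t i p t'
  | appL {t i p t' u} : CBN S env t i p t' → CBN S env (.app t u) i p (.app t' u)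
  | tup {pre post : List Tm} {t i p t'} : (∀ u ∈ pre, IsValue u) → ¬ IsValue t →
      CBN S env t i p t' →
      CBN S env (.tup (pre ++ t :: post)) i p (.tup (pre ++ t' :: post))
  | trust {t i p t' P e} : CBN S env t i p t' →
      CBN S env (.trust t P e) i p (.trust t' P e)
  | proj {t i p t' j} : (∀ ts, t ≠ .tup ts) → CBN S env t i p t' →
      CBN S env (.proj t j) i p (.proj t' j)

/-- Redexes of λ^test_trust. -/
inductive IsRedex : Tm → Prop where
  | beta {x A t u} : IsRedex (.app (.lam x A t) u)
  | choice {qs ts} : IsRedex (.choice qs ts)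
  | exp {n t} : IsRedex (.exp n t)
  | proj {ts : List Tm} {j : ℕ} : 1 ≤ j → j ≤ ts.length → IsRedex (.proj (.tup ts) j)
  | trust {ts P e} : (∀ u ∈ ts, IsValue u) → IsRedex (.trust (.tup ts) P e)

/-- `t` contains a redex (as a subterm). -/
inductive HasRedex : Tm → Prop where
  | here {t} : IsRedex t → HasRedex t
  | lam {x A t} : HasRedex t → HasRedex (.lam x A t)
  | appL {t u} : HasRedex t → HasRedex (.app t u)
  | appR {t u} : HasRedex u → HasRedex (.app t u)
  | choice {qs ts t} : t ∈ ts → HasRedex t → HasRedex (.choice qs ts)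
  | exp {n t} : HasRedex t → HasRedex (.exp n t)
  | tup {ts t} : t ∈ ts → HasRedex t → HasRedex (.tup ts)
  | proj {t j} : HasRedex t → HasRedex (.proj t j)
  | trust {t P e} : HasRedex t → HasRedex (.trust t P e)

/-- Full (unrestricted) one-step reduction: a base reduction applied in an
    arbitrary position. -/
inductive Full (S : ℕ → ℕ → Prop) (env : ℕ → Ty) : Tm → Tm → Prop where
  | base {t t' i p} : Step S env t i p t' → Full S env t t'
  | lam {x A t t'} : Full S env t t' → Full S env (.lam x A t) (.lam x A t')
  | appL {t t' u} : Full S env t t' → Full S env (.app t u) (.app t' u)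
  | appR {t u u'} : Full S env u u' → Full S env (.app t u) (.app t u')
  | choice {qs pre post t t'} : Full S env t t' →
      Full S env (.choice qs (pre ++ t :: post)) (.choice qs (pre ++ t' :: post))
  | exp {n t t'} : Full S env t t' → Full S env (.exp n t) (.exp n t')
  | tup {pre post t t'} : Full S env t t' →
      Full S env (.tup (pre ++ t :: post)) (.tup (pre ++ t' :: post))
  | proj {t t' j} : Full S env t t' → Full S env (.proj t j) (.proj t' j)
  | trust {t t' P e} : Full S env t t' → Full S env (.trust t P e) (.trust t' P e)

/-- In λ^test_trust, every closed typed term that contains no redex is a value. -/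
theorem closed_noredex_is_value (S : ℕ → ℕ → Prop) (env : ℕ → Ty)
    (t : Tm) (T : Ty) (ht : HasTy S env t T) (hc : Closed t)
    (hnr : ¬ HasRedex t) : IsValue t := by
  unfold Closed at hc
  induction ht with
  | tt => exact .tt
  | ff => exact .ff
  | var => cases hc with | var h => cases h
  | lam _ _ => exact .lam
  | app hf _ _ ihf _ =>
    cases hc with
    | app hc1 hc2 =>
      have hv := ihf hc1 (fun h => hnr (.appL h))
      cases hv <;> cases hf
      exact absurd (.here .beta) hnr
  | appChoice hf _ _ _ ihf _ =>
    cases hc with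
    | app hc1 hc2 =>
      have hv := ihf hc1 (fun h => hnr (.appL h))
      cases hv <;> cases hf
  | choice => exact absurd (.here .choice) hnr
  | exp => exact absurd (.here .exp) hnr
  | tup _ hlen _ _ ih =>
    cases hc with
    | tup hc =>
      refine .tup fun u hu => ?_
      obtain ⟨i, hi, rfl⟩ := List.mem_iff_getElem.mp hu
      exact ih i hi (hlen ▸ hi) (hc _ hu) (fun h => hnr (.tup hu h))
  | proj hf h1 h2 ihf =>
    cases hc with
    | proj hc =>
      have hv := ihf hc (fun h => hnr (.proj h))
      cases hv <;> cases hf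
      exact absurd (.here (.proj h1 h2)) hnr
  | trust hf ihf =>
    cases hc with
    | trust hc =>
      have hv := ihf hc (fun h => hnr (.trust h))
      cases hv with
      | tup hv => exact absurd (.here (.trust hv)) hnr
      | _ => cases hf
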